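/- Let G be a finite tree (a finite connected acyclic simple graph) on vertex set V and let S′ be a finite set of vertices of G. Then there exists a matching M of S′, i.e., a set of pairwise disjoint two-element subsets of S′, such that at most one element of S′ is not covered by M, and such that for any two distinct pairs {u, v} and {u′, v′} in M, the unique path in G between u and v and the unique path in G between u′ and v′ are edge-disjoint. -/

import Mathlib

/-!
An almost perfect matching of `S'` with the least total distance between partners has the required
property. The paths of a tree are shortest walks, so if those joining `u, v` and `u', v'` shared an
edge, then cutting both at that edge and reconnecting the pieces would give walks of smaller total
length joining `u, u'` and `v, v'`, or `u, v'` and `v, u'`; re-pairing accordingly would lower the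
total distance.
-/

open Equiv (Perm swap)

section Walks

variable {V : Type*} {G : SimpleGraph V} {u v u' v' : V}

theorem exists_walks_of_mem_darts {P : G.Walk u v} {d : G.Dart} (hd : d ∈ P.darts) :
    ∃ (p : G.Walk u d.fst) (q : G.Walk d.snd v), p.length + q.length + 1 = P.length := by
  obtain ⟨p, q, rfl⟩ := P.isSubwalk_toWalk_adj_iff_mem_darts.mpr hd
  refine ⟨p, q, ?_⟩
  simp only [SimpleGraph.Walk.length_append, SimpleGraph.Adj.length_toWalk]
  omega

theorem dist_add_dist_lt_of_mem_edges {P : G.Walk u v} {Q : G.Walk u' v'} {e : Sym2 V}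
    (hP : e ∈ P.edges) (hQ : e ∈ Q.edges) :
    G.dist u u' + G.dist v v' < P.length + Q.length ∨
      G.dist u v' + G.dist v u' < P.length + Q.length := by
  obtain ⟨d, hd, rfl⟩ := List.mem_map.mp hP
  obtain ⟨d', hd', hdd'⟩ := List.mem_map.mp hQ
  obtain ⟨p₁, p₂, hp⟩ := exists_walks_of_mem_darts hd
  rcases (SimpleGraph.dart_edge_eq_iff _ _).mp hdd' with rfl | rfl
  · left
    obtain ⟨q₁, q₂, hq⟩ := exists_walks_of_mem_darts hd'
    have hu := SimpleGraph.dist_le (p₁.append q₁.reverse)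
    have hv := SimpleGraph.dist_le (p₂.reverse.append q₂)
    simp only [SimpleGraph.Walk.length_append, SimpleGraph.Walk.length_reverse] at hu hv
    omega
  · right
    obtain ⟨q₁, q₂, hq⟩ : ∃ (q₁ : G.Walk u' d.snd) (q₂ : G.Walk d.fst v'),
        q₁.length + q₂.length + 1 = Q.length := exists_walks_of_mem_darts hd'
    have hu := SimpleGraph.dist_le (p₁.append q₂)
    have hv := SimpleGraph.dist_le (p₂.reverse.append q₁.reverse)
    simp only [SimpleGraph.Walk.length_append, SimpleGraph.Walk.length_reverse] at hu hv
    omega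

theorem length_eq_dist_of_isAcyclic (hG : G.IsAcyclic) (P : G.Path u v) :
    (P : G.Walk u v).length = G.dist u v := by
  obtain ⟨Q, hQ, hlength⟩ := (P : G.Walk u v).reachable.exists_path_of_dist
  rw [(hG.subsingleton_path u v).elim P ⟨Q, hQ⟩, hlength]

end Walks

/-- An almost perfect matching of `S`, encoded as an involution: `σ` exchanges the two elements of
each pair and fixes the unmatched element of `S`, if there is one; its values outside `S` are
irrelevant. In this encoding, re-pairing is conjugation by a transposition. -/
structure IsNearPerfectPairing {V : Type*} (S : Finset V) (σ : Perm V) : Prop where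
  involutive : Function.Involutive σ
  apply_mem : ∀ x ∈ S, σ x ∈ S
  subsingleton_fixed : {x | x ∈ S ∧ σ x = x}.Subsingleton

/-- The total cost of a pairing, in which each pair is counted once for each of its elements. -/
def pairingCost {V R : Type*} [AddCommMonoid R] (d : V → V → R) (S : Finset V) (σ : Perm V) : R :=
  ∑ x ∈ S, d x (σ x)

section Pairing

variable {V : Type*} {S : Finset V} {σ τ : Perm V}

theorem exists_isNearPerfectPairing (S : Finset V) : ∃ σ, IsNearPerfectPairing S σ := by
  classical
  let e : Fin S.card ≃ {x // x ∈ S} := S.equivFin.symm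
  let σ : Perm V := Fin.revPerm.extendDomain e
  have hσ (i : Fin S.card) : σ (e i) = e i.rev := Fin.revPerm.extendDomain_apply_image e i
  have exists_index {x : V} (hx : x ∈ S) : ∃ i, (e i : V) = x :=
    ⟨e.symm ⟨x, hx⟩, by rw [e.apply_symm_apply]⟩
  refine ⟨σ, fun x => ?_, fun x hx => ?_, ?_⟩
  · by_cases hx : x ∈ S
    · obtain ⟨i, rfl⟩ := exists_index hx
      rw [hσ, hσ, Fin.rev_rev]
    · simp only [σ, Fin.revPerm.extendDomain_apply_not_subtype e hx]
  · obtain ⟨i, rfl⟩ := exists_index hx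
    exact hσ i ▸ (e i.rev).2
  · rintro x ⟨hx, hxσ⟩ y ⟨hy, hyσ⟩
    obtain ⟨i, rfl⟩ := exists_index hx
    obtain ⟨j, rfl⟩ := exists_index hy
    rw [hσ, SetCoe.ext_iff, e.apply_eq_iff_eq, Fin.ext_iff, Fin.val_rev] at hxσ hyσ
    have hij : i = j := by omega
    rw [hij]

theorem IsNearPerfectPairing.conj (hσ : IsNearPerfectPairing S σ) (hτ : ∀ x, τ x ∈ S ↔ x ∈ S) :
    IsNearPerfectPairing S (τ * σ * τ⁻¹) where
  involutive x := by simp [hσ.involutive (τ.symm x)]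
  apply_mem x hx := by
    refine (hτ _).mpr (hσ.apply_mem _ ((hτ _).mp ?_))
    simpa using hx
  subsingleton_fixed := by
    have mem_fixed {x : V} (hx : x ∈ S ∧ (τ * σ * τ⁻¹) x = x) :
        τ⁻¹ x ∈ {x | x ∈ S ∧ σ x = x} :=
      ⟨(hτ _).mp (by simpa using hx.1), Perm.eq_inv_iff_eq.mpr hx.2⟩
    exact fun x hx y hy => τ⁻¹.injective (hσ.subsingleton_fixed (mem_fixed hx) (mem_fixed hy))

theorem pairingCost_conj {R : Type*} [AddCommMonoid R] (d : V → V → R)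
    (hτ : ∀ x, τ x ∈ S ↔ x ∈ S) :
    pairingCost d S (τ * σ * τ⁻¹) = ∑ x ∈ S, d (τ x) (τ (σ x)) :=
  (Finset.sum_equiv τ (fun x => (hτ x).symm) fun x _ => by simp).symm

theorem swap_mem_iff_mem [DecidableEq V] {a b : V} (ha : a ∈ S) (hb : b ∈ S) (x : V) :
    swap a b x ∈ S ↔ x ∈ S := by
  rw [Equiv.swap_apply_def]
  split_ifs with hxa hxb <;> simp_all

theorem IsNearPerfectPairing.add_le_add_of_minimalFor {R : Type*} [AddCommMonoid R] [LinearOrder R]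
    [IsOrderedCancelAddMonoid R] {d : V → V → R} (hd : ∀ x y, d x y = d y x)
    (hσ : MinimalFor (IsNearPerfectPairing S) (pairingCost d S) σ) {x y : V}
    (hx : x ∈ S) (hy : y ∈ S) (hσx : σ x ≠ x) (hσy : σ y ≠ y) (hyx : y ≠ x) (hyσx : y ≠ σ x) :
    d x (σ x) + d y (σ y) ≤ d x y + d (σ x) (σ y) := by
  classical
  have hσσ := hσ.prop.involutive
  have hσx_mem := hσ.prop.apply_mem x hx
  have hσy_mem := hσ.prop.apply_mem y hy
  have hσyx : σ y ≠ x := fun h => hyσx (hσσ.eq_iff.mp h)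
  have hσyσx : σ y ≠ σ x := σ.injective.ne hyx
  let τ : Perm V := swap (σ x) y
  have hτ := swap_mem_iff_mem hσx_mem hy
  let T : Finset V := {x, σ x, y, σ y}
  have hTS : T ⊆ S := by simp [T, Finset.insert_subset_iff, *]
  have sum_T (f : V → R) : ∑ z ∈ T, f z = f x + (f (σ x) + (f y + f (σ y))) := by
    simp [T, Finset.sum_insert, hσx.symm, hyx.symm, hσyx.symm, hyσx.symm, hσyσx.symm, hσy.symm]
  have eq_off_T : ∀ z ∈ S \ T, d (τ z) (τ (σ z)) = d z (σ z) := by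
    intro z hz
    simp only [T, Finset.mem_sdiff, Finset.mem_insert, Finset.mem_singleton, not_or] at hz
    obtain ⟨-, hzx, hzσx, hzy, hzσy⟩ := hz
    rw [Equiv.swap_apply_of_ne_of_ne hzσx hzy,
      Equiv.swap_apply_of_ne_of_ne (σ.injective.ne hzx) (hσσ.eq_iff.not.mpr hzσy)]
  have hle : pairingCost d S σ ≤ pairingCost d S (τ * σ * τ⁻¹) := hσ.le (hσ.prop.conj hτ)
  rw [pairingCost_conj d hτ, pairingCost, ← Finset.sum_sdiff hTS, ← Finset.sum_sdiff hTS,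
    Finset.sum_congr rfl eq_off_T, add_le_add_iff_left, sum_T, sum_T, hσσ x, hσσ y] at hle
  simp only [Equiv.swap_apply_left, Equiv.swap_apply_right,
    Equiv.swap_apply_of_ne_of_ne hσx.symm hyx.symm,
    Equiv.swap_apply_of_ne_of_ne hσyσx hσy] at hle
  rw [hd (σ x) x, hd (σ y) y, hd y x, hd (σ y) (σ x)] at hle
  refine le_of_not_gt fun hlt => hle.not_gt ?_
  convert add_lt_add hlt hlt using 1 <;> abel

end Pairing

/-- The two-element subsets of `S` formed by the elements that `σ` moves and their partners. -/
def pairsOf {V : Type*} [DecidableEq V] (S : Finset V) (σ : Perm V) : Finset (Finset V) :=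
  {x ∈ S | σ x ≠ x}.image fun x => {x, σ x}

theorem card_eq_two_of_mem_pairsOf {V : Type*} [DecidableEq V] {S : Finset V} {σ : Perm V}
    {p : Finset V} (hp : p ∈ pairsOf S σ) : p.card = 2 := by
  simp only [pairsOf, Finset.mem_image, Finset.mem_filter] at hp
  obtain ⟨x, ⟨-, hσx⟩, rfl⟩ := hp
  exact Finset.card_pair hσx.symm

namespace IsNearPerfectPairing

variable {V : Type*} [DecidableEq V] {S : Finset V} {σ : Perm V} {p q : Finset V} {x y : V}

theorem eq_pair_of_mem (hσ : IsNearPerfectPairing S σ) (hp : p ∈ pairsOf S σ) (hx : x ∈ p) :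
    x ∈ S ∧ σ x ≠ x ∧ p = {x, σ x} := by
  simp only [pairsOf, Finset.mem_image, Finset.mem_filter] at hp
  obtain ⟨z, ⟨hz, hσz⟩, rfl⟩ := hp
  rcases Finset.mem_insert.mp hx with rfl | hx
  · exact ⟨hz, hσz, rfl⟩
  · obtain rfl := Finset.mem_singleton.mp hx
    rw [hσ.involutive z]
    exact ⟨hσ.apply_mem z hz, hσz.symm, Finset.pair_comm _ _⟩

theorem apply_eq_of_mem (hσ : IsNearPerfectPairing S σ) (hp : p ∈ pairsOf S σ) (hx : x ∈ p)
    (hy : y ∈ p) (hxy : x ≠ y) : σ x = y := by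
  rw [(hσ.eq_pair_of_mem hp hx).2.2, Finset.mem_insert, Finset.mem_singleton] at hy
  exact (hy.resolve_left hxy.symm).symm

theorem disjoint_of_ne (hσ : IsNearPerfectPairing S σ) (hp : p ∈ pairsOf S σ)
    (hq : q ∈ pairsOf S σ) (hpq : p ≠ q) : Disjoint p q :=
  Finset.disjoint_left.mpr fun _ hxp hxq =>
    hpq ((hσ.eq_pair_of_mem hp hxp).2.2.trans (hσ.eq_pair_of_mem hq hxq).2.2.symm)

theorem card_uncovered_le_one (hσ : IsNearPerfectPairing S σ) :
    {x ∈ S | ∀ p ∈ pairsOf S σ, x ∉ p}.card ≤ 1 := by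
  have fixed_of_uncovered {x : V} (hx : x ∈ {x ∈ S | ∀ p ∈ pairsOf S σ, x ∉ p}) :
      x ∈ {x | x ∈ S ∧ σ x = x} := by
    obtain ⟨hxS, hxp⟩ := Finset.mem_filter.mp hx
    refine ⟨hxS, by_contra fun hσx => hxp {x, σ x} ?_ (Finset.mem_insert_self _ _)⟩
    exact Finset.mem_image_of_mem _ (Finset.mem_filter.mpr ⟨hxS, hσx⟩)
  exact Finset.card_le_one.mpr fun x hx y hy =>
    hσ.subsingleton_fixed (fixed_of_uncovered hx) (fixed_of_uncovered hy)

end IsNearPerfectPairing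

theorem edges_disjoint_of_minimalFor {V : Type*} {G : SimpleGraph V} {S : Finset V} {σ : Perm V}
    (hσ : MinimalFor (IsNearPerfectPairing S) (pairingCost G.dist S) σ) {x y : V}
    (hx : x ∈ S) (hy : y ∈ S) (hσx : σ x ≠ x) (hσy : σ y ≠ y) (hyx : y ≠ x) (hyσx : y ≠ σ x)
    {P : G.Walk x (σ x)} {Q : G.Walk y (σ y)}
    (hP : P.length = G.dist x (σ x)) (hQ : Q.length = G.dist y (σ y)) :
    P.edges.Disjoint Q.edges := by
  intro e heP heQ
  have hσσ := hσ.prop.involutive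
  have hle := IsNearPerfectPairing.add_le_add_of_minimalFor (fun _ _ => G.dist_comm) hσ hx hy
    hσx hσy hyx hyσx
  have hle' := IsNearPerfectPairing.add_le_add_of_minimalFor (fun _ _ => G.dist_comm) hσ hx
    (hσ.prop.apply_mem y hy) hσx (σ.injective.ne hσy)
    (fun h => hyσx (hσσ.eq_iff.mp h)) (σ.injective.ne hyx)
  rw [hσσ y, G.dist_comm (u := σ y) (v := y)] at hle'
  rcases dist_add_dist_lt_of_mem_edges heP heQ with hlt | hlt <;> omega

theorem tree_matching_edge_disjoint_paths_general {V : Type*} [DecidableEq V]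
    (G : SimpleGraph V) (S : Finset V) :
    ∃ M : Finset (Finset V),
      (∀ p ∈ M, p.card = 2 ∧ p ⊆ S) ∧
      ((M : Set (Finset V)).Pairwise fun p q => Disjoint p q) ∧
      (S.filter fun v => ∀ p ∈ M, v ∉ p).card ≤ 1 ∧
      (∀ p ∈ M, ∀ q ∈ M, p ≠ q →
        ∀ u v u' v' : V, u ∈ p → v ∈ p → u ≠ v → u' ∈ q → v' ∈ q → u' ≠ v' →
          ∀ (P : G.Walk u v) (Q : G.Walk u' v'), P.length = G.dist u v → Q.length = G.dist u' v' →
            P.edges.Disjoint Q.edges) := by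
  obtain ⟨σ, hmin⟩ := exists_minimalFor_of_wellFoundedLT (IsNearPerfectPairing S)
    (pairingCost G.dist S) (exists_isNearPerfectPairing S)
  have hσ := hmin.prop
  refine ⟨pairsOf S σ, fun p hp => ⟨card_eq_two_of_mem_pairsOf hp,
    fun x hx => (hσ.eq_pair_of_mem hp hx).1⟩, fun p hp q hq => hσ.disjoint_of_ne hp hq,
    hσ.card_uncovered_le_one, ?_⟩
  intro p hp q hq hpq u v u' v' hu hv huv hu' hv' huv' P Q hP hQ
  have hdisj := hσ.disjoint_of_ne hp hq hpq
  obtain rfl := hσ.apply_eq_of_mem hp hu hv huv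
  obtain rfl := hσ.apply_eq_of_mem hq hu' hv' huv'
  exact edges_disjoint_of_minimalFor hmin (hσ.eq_pair_of_mem hp hu).1
    (hσ.eq_pair_of_mem hq hu').1 huv.symm huv'.symm
    (Finset.disjoint_iff_ne.mp hdisj u hu u' hu').symm
    (Finset.disjoint_iff_ne.mp hdisj (σ u) hv u' hu').symm hP hQ

/-- Lemma 1.6: in a finite tree `G`, any finite set `S'` of vertices admits a matching
(a set of pairwise disjoint two-element subsets of `S'`) leaving at most one vertex of
`S'` unmatched, such that the unique tree-paths connecting the two endpoints of
distinct pairs are edge-disjoint. -/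
theorem tree_matching_edge_disjoint_paths {V : Type*} [Fintype V] [DecidableEq V]
    (G : SimpleGraph V) (hG : G.IsTree) (S' : Finset V) :
    ∃ M : Finset (Finset V),
      (∀ p ∈ M, p.card = 2 ∧ p ⊆ S') ∧
      ((M : Set (Finset V)).Pairwise fun p q => Disjoint p q) ∧
      (S'.filter fun v => ∀ p ∈ M, v ∉ p).card ≤ 1 ∧
      (∀ p ∈ M, ∀ q ∈ M, p ≠ q →
        ∀ u v u' v' : V, u ∈ p → v ∈ p → u ≠ v → u' ∈ q → v' ∈ q → u' ≠ v' →
          ∀ (P : G.Path u v) (Q : G.Path u' v'),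
            ∀ e ∈ (P : G.Walk u v).edges, e ∉ (Q : G.Walk u' v').edges) := by
  obtain ⟨M, hpairs, hdisjoint, huncovered, hedges⟩ :=
    tree_matching_edge_disjoint_paths_general G S'
  -- `Fintype V` makes the statement use another decidability instance, hence `convert`.
  exact ⟨M, hpairs, hdisjoint, by convert huncovered,
    fun p hp q hq hpq u v u' v' hu hv huv hu' hv' huv' P Q =>
      hedges p hp q hq hpq u v u' v' hu hv huv hu' hv' huv' P Q
        (length_eq_dist_of_isAcyclic hG.isAcyclic P) (length_eq_dist_of_isAcyclic hG.isAcyclic Q)⟩
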